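/- arXiv:2109.13605 — 2 statements merged into one kernel-verified Lean document; each statement's English description precedes it below -/
import Mathlib

section
/- Let J be a commutative (not necessarily associative, not necessarily unital) ℝ-algebra satisfying the Jordan identity (x * y) * (x * x) = x * (y * (x * x)) for all x, y ∈ J, and let a ∈ J be an idempotent (a * a = a). Then J is the internal direct sum of the three ℝ-subspaces J₁(a) = {x ∈ J | a * x = x}, J_{1/2}(a) = {x ∈ J | a * x = (1/2) • x}, and J₀(a) = {x ∈ J | a * x = 0} (Peirce decomposition of a Jordan algebra relative to an idempotent). -/
/-- Peirce decomposition of a Jordan algebra relative to an idempotent `a`: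
the algebra is the internal direct sum of the eigenspaces of `L_a : x ↦ a * x`
for the eigenvalues `1`, `1/2` and `0`; i.e. every element decomposes uniquely
as a sum of elements of `J₁(a)`, `J_{1/2}(a)` and `J₀(a)`. -/
theorem jordan_peirce_decomposition
    {J : Type*} [AddCommGroup J] [Module ℝ J]
    (mul : J →ₗ[ℝ] J →ₗ[ℝ] J)
    (hcomm : ∀ x y : J, mul x y = mul y x)
    (hjordan : ∀ x y : J, mul (mul x y) (mul x x) = mul x (mul y (mul x x)))
    (a : J) (ha : mul a a = a) :
    ∀ x : J, ∃! p : J × J × J,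
      mul a p.1 = p.1 ∧
      mul a p.2.1 = (1 / 2 : ℝ) • p.2.1 ∧
      mul a p.2.2 = 0 ∧
      x = p.1 + p.2.1 + p.2.2 := by
  have key : ∀ z : J, (2 : ℝ) • mul a (mul a (mul a z)) = (3 : ℝ) • mul a (mul a z) - mul a z := by
    intro z
    have h1 := hjordan (a + z) a
    have h2 := hjordan (a - z) a
    have h3 := hjordan z a
    have e1 : mul z a = mul a z := hcomm z a
    have e2 : mul (mul a z) a = mul a (mul a z) := hcomm _ _
    simp only [map_add, map_sub, LinearMap.add_apply, LinearMap.sub_apply, ha, e1, e2] at h1 h2 h3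
    have h4 := congrArg₂ (fun u v : J => u - v) h1 h2
    have h5 : (2 : ℝ) • ((2 : ℝ) • mul a (mul a (mul a z))) = (2 : ℝ) • ((3 : ℝ) • mul a (mul a z) - mul a z) := by
      linear_combination (norm := module) (2 : ℝ) • h3 - h4
    exact smul_right_injective J (two_ne_zero (α := ℝ)) h5
  intro x
  have k := key x
  refine ⟨((2 : ℝ) • mul a (mul a x) - mul a x, (4 : ℝ) • mul a x - (4 : ℝ) • mul a (mul a x),
    x - (3 : ℝ) • mul a x + (2 : ℝ) • mul a (mul a x)), ⟨?_, ?_, ?_, ?_⟩, ?_⟩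
  · simp only [map_add, map_sub, map_smul]
    linear_combination (norm := module) k
  · simp only [map_add, map_sub, map_smul]
    linear_combination (norm := module) (-2 : ℝ) • k
  · simp only [map_add, map_sub, map_smul]
    linear_combination (norm := module) k
  · simp only
    module
  · rintro ⟨p, q, r⟩ ⟨hp, hq, hr, hx⟩
    simp only at hp hq hr hx
    have l1 : mul a x = p + (1 / 2 : ℝ) • q := by
      rw [hx]; simp only [map_add, hp, hq, hr, add_zero]
    have l2 : mul a (mul a x) = p + (1 / 4 : ℝ) • q := by
      rw [l1]; simp only [map_add, map_smul, hp, hq]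
      module
    rw [l2, l1, hx]
    refine Prod.ext ?_ (Prod.ext ?_ ?_) <;> simp only <;> module
end

section
/- Let A be an associative unital ℝ-algebra of dimension 2 over ℝ. Then there exists an element ε ∈ A such that (1, ε) is an ℝ-basis of A and ε² = 1, or ε² = −1, or ε² = 0. Consequently every two-dimensional unital associative ℝ-algebra is isomorphic to the paracomplex numbers, to the complex numbers, or to the dual numbers. -/
lemma aux_bij {A : Type*} [Ring A] [Algebra ℝ A] (hdim : Module.finrank ℝ A = 2) (e : A)
    (he : ∀ r : ℝ, algebraMap ℝ A r ≠ e) (x : A) :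
    ∃! c : ℝ × ℝ, x = algebraMap ℝ A c.1 + c.2 • e := by
  have : Nontrivial A := Module.nontrivial_of_finrank_pos (R := ℝ) (by omega)
  have : Module.Finite ℝ A := Module.finite_of_finrank_pos (by omega)
  let f : ℝ × ℝ →ₗ[ℝ] A :=
    (Algebra.linearMap ℝ A).coprod (LinearMap.toSpanSingleton ℝ A e)
  have hf : ∀ c, f c = algebraMap ℝ A c.1 + c.2 • e := fun c => by simp [f]
  have hinj : Function.Injective f := by
    rw [← LinearMap.ker_eq_bot, LinearMap.ker_eq_bot']
    rintro ⟨a, b⟩ h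
    rw [hf] at h
    simp only at h
    have hb : b = 0 := by
      by_contra hb
      apply he (-(b⁻¹ * a))
      have h2 : b • e = - algebraMap ℝ A a := by
        rw [eq_neg_iff_add_eq_zero, add_comm]; exact h
      have h3 : e = b⁻¹ • (b • e) := by rw [smul_smul, inv_mul_cancel₀ hb, one_smul]
      rw [h3, h2, map_neg, smul_neg, Algebra.algebraMap_eq_smul_one,
        Algebra.algebraMap_eq_smul_one, smul_smul]
    subst hb
    have ha : a = 0 := by simpa using h
    simp [ha]
  have hsurj : Function.Surjective f :=
    (LinearMap.injective_iff_surjective_of_finrank_eq_finrank (by simp [hdim])).1 hinj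
  obtain ⟨c, hc⟩ := hsurj x
  refine ⟨c, by simp only [← hf]; exact hc.symm, fun d hd => hinj ?_⟩
  rw [hc, hf]; exact hd.symm

lemma aux_iso {A : Type*} [Ring A] [Algebra ℝ A] (hdim : Module.finrank ℝ A = 2) (e : A)
    (he : ∀ r : ℝ, algebraMap ℝ A r ≠ e) (a : ℝ) (h : e * e = algebraMap ℝ A a) :
    Nonempty (QuadraticAlgebra ℝ a 0 ≃ₐ[ℝ] A) := by
  let g : QuadraticAlgebra ℝ a 0 →ₐ[ℝ] A :=
    QuadraticAlgebra.lift ⟨e, by simp [h, Algebra.algebraMap_eq_smul_one]⟩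
  have hg : ∀ z, g z = algebraMap ℝ A z.re + z.im • e := fun z => by
    simp [g, QuadraticAlgebra.lift, Algebra.algebraMap_eq_smul_one]
  refine ⟨AlgEquiv.ofBijective g ⟨fun z w hzw => ?_, fun x => ?_⟩⟩
  · have := (aux_bij hdim e he (g z)).unique (y₁ := (z.re, z.im)) (y₂ := (w.re, w.im)) (hg z)
      (hzw.trans (hg w))
    ext
    · exact congrArg Prod.fst this
    · exact congrArg Prod.snd this
  · obtain ⟨c, hc, -⟩ := aux_bij hdim e he x
    exact ⟨⟨c.1, c.2⟩, (hg _).trans hc.symm⟩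

lemma aux_eps {A : Type*} [Ring A] [Algebra ℝ A] (hdim : Module.finrank ℝ A = 2) :
    ∃ e : A, (∀ r : ℝ, algebraMap ℝ A r ≠ e) ∧ (e * e = 1 ∨ e * e = -1 ∨ e * e = 0) := by
  obtain ⟨u, hu⟩ : ∃ u : A, ∀ r : ℝ, algebraMap ℝ A r ≠ u := by
    by_contra! hcon
    have := LinearMap.finrank_le_finrank_of_surjective (f := Algebra.linearMap ℝ A) hcon
    simp [hdim] at this
  obtain ⟨⟨p, q⟩, hpq, -⟩ := aux_bij hdim u hu (u * u)
  simp only [Algebra.algebraMap_eq_smul_one] at hpq hu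
  obtain ⟨v, hv, d, hd⟩ : ∃ v : A, (∀ r : ℝ, r • (1 : A) ≠ v) ∧ ∃ d : ℝ, v * v = d • (1 : A) := by
    refine ⟨u - (q / 2) • (1 : A), fun r hr => hu (r + q / 2) ?_, p + q ^ 2 / 4, ?_⟩
    · rw [add_smul, hr, sub_add_cancel]
    · simp only [sub_mul, mul_sub, hpq, smul_mul_assoc, mul_smul_comm, one_mul, mul_one]
      module
  have key : ∀ s : ℝ, s ≠ 0 → ∀ r : ℝ, algebraMap ℝ A r ≠ s • v := by
    intro s hs r hr
    apply hv (s⁻¹ * r)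
    rw [mul_smul, ← Algebra.algebraMap_eq_smul_one, hr, smul_smul, inv_mul_cancel₀ hs, one_smul]
  have sq : ∀ s : ℝ, (s • v) * (s • v) = (s ^ 2 * d) • (1 : A) := fun s => by
    rw [smul_mul_smul_comm, hd, smul_smul, pow_two]
  rcases lt_trichotomy d 0 with h | h | h
  · have hs : Real.sqrt (-d) ≠ 0 := (Real.sqrt_pos.2 (by linarith)).ne'
    refine ⟨_, key (Real.sqrt (-d))⁻¹ (inv_ne_zero hs), Or.inr (Or.inl ?_)⟩
    rw [sq, inv_pow, Real.sq_sqrt (by linarith), inv_neg, neg_mul, inv_mul_cancel₀ h.ne]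
    simp
  · exact ⟨_, key 1 one_ne_zero, Or.inr (Or.inr (by rw [sq, h]; simp))⟩
  · have hs : Real.sqrt d ≠ 0 := (Real.sqrt_pos.2 h).ne'
    refine ⟨_, key (Real.sqrt d)⁻¹ (inv_ne_zero hs), Or.inl ?_⟩
    rw [sq, inv_pow, Real.sq_sqrt h.le, inv_mul_cancel₀ h.ne', one_smul]


/-- Every two-dimensional associative unital ℝ-algebra has a basis `(1, ε)` with
`ε² = 1`, `ε² = -1` or `ε² = 0`; consequently it is isomorphic as an ℝ-algebra to
the paracomplex numbers `ℝ × ℝ`, to the complex numbers `ℂ`, or to the dual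
numbers `ℝ[ε]/(ε²)`. -/
theorem two_dimensional_real_algebra_classification
    (A : Type*) [Ring A] [Algebra ℝ A] (hdim : Module.finrank ℝ A = 2) :
    (∃ ε : A,
      (∀ x : A, ∃! c : ℝ × ℝ, x = algebraMap ℝ A c.1 + c.2 • ε) ∧
      (ε * ε = 1 ∨ ε * ε = -1 ∨ ε * ε = 0)) ∧
    (Nonempty (A ≃ₐ[ℝ] (ℝ × ℝ)) ∨ Nonempty (A ≃ₐ[ℝ] ℂ) ∨
      Nonempty (A ≃ₐ[ℝ] DualNumber ℝ)) := by
  obtain ⟨e, he, h⟩ := aux_eps hdim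
  refine ⟨⟨e, aux_bij hdim e he, h⟩, ?_⟩
  rcases h with h | h | h
  · left
    obtain ⟨f⟩ := aux_iso hdim e he 1 (by simp [h])
    obtain ⟨g⟩ := aux_iso (A := ℝ × ℝ) (by simp) (1, -1)
      (fun r hr => by
        have h1 : r = 1 := congrArg Prod.fst hr
        have h2 : r = -1 := congrArg Prod.snd hr
        linarith) 1 (by ext <;> simp)
    exact ⟨f.symm.trans g⟩
  · right; left
    obtain ⟨f⟩ := aux_iso hdim e he (-1) (by simp [h])
    obtain ⟨g⟩ := aux_iso (A := ℂ) Complex.finrank_real_complex Complex.I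
      (fun r hr => by
        have h1 := congrArg Complex.im hr
        simp at h1) (-1) (by simp)
    exact ⟨f.symm.trans g⟩
  · right; right
    obtain ⟨f⟩ := aux_iso hdim e he 0 (by simp [h])
    obtain ⟨g⟩ := aux_iso (A := DualNumber ℝ)
      (by
        change Module.finrank ℝ (ℝ × ℝ) = 2
        simp) DualNumber.eps
      (fun r hr => by
        have h1 : (0 : ℝ) = 1 := congrArg TrivSqZeroExt.snd hr
        simp at h1) 0 (by simp)
    exact ⟨f.symm.trans g⟩
end
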